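/- arXiv:2507.11009 — 2 statements merged into one kernel-verified Lean document; each statement's English description precedes it below -/
import Mathlib

section
/- For every y ∈ {1, ..., m}, the map (t, s) ↦ t + s·d_{n'−1,y} is injective on T_{n'−1,y} × {0, ..., r̄−1}, and {t + s·d_{n'−1,y} : t ∈ T_{n'−1,y}, s ∈ {0, ..., r̄−1}} = {P·v : v ∈ {0, 1, ..., l−1}}, where P = ∏_{j=1}^{y−1} p_j (empty product = 1). -/
/-- `∏_{j=1}^{y-1} p_j` (the empty product is `1`). -/
def bigP (p : ℕ → ℕ) (y : ℕ) : ℕ := ∏ j ∈ Finset.Icc 1 (y - 1), p j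

/-- `d_{w,y} = r^w · ∏_{j=1}^{y-1} p_j`. -/
def dwy (p : ℕ → ℕ) (r w y : ℕ) : ℕ := r ^ w * bigP p y

/-- The digit of `t` at position `pos = w·m + y` (`1 ≤ y ≤ m`) in the multi-base
expansion `t = Σ_{w,y} t_{wm+y} · d_{w,y}`, namely `(t / d_{w,y}) % p_y`. -/
def digit (p : ℕ → ℕ) (m r t pos : ℕ) : ℕ :=
  t / dwy p r ((pos - 1) / m) ((pos - 1) % m + 1) % p ((pos - 1) % m + 1)

/-- `T_{n'-1,y}`: the `t ∈ {0,…,l-1}` whose digits at positions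
`(n'-1)m+y, …, n'm` and at positions `1, …, y-1` all vanish. -/
def Ttop (p : ℕ → ℕ) (m r n' l y : ℕ) : Set ℕ :=
  {t : ℕ | t < l ∧
    (∀ pos, (n' - 1) * m + y ≤ pos → pos ≤ n' * m → digit p m r t pos = 0) ∧
    (∀ pos, 1 ≤ pos → pos ≤ y - 1 → digit p m r t pos = 0)}

/-!
Within one block of `m` positions, consecutive digits of `t` vanish exactly when the product of
their bases divides the quotient of `t` by the lowest place value involved. The low digit conditions
thus say `P ∣ t` and, as `t < l`, the high ones say `t < d` with `d = d_{n'-1,y}`. So `t + s * d` is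
division with remainder by `d`, restricted to multiples of `P`. As `P ∣ d`, the values obtained are
the multiples of `P` below `r * d = P * l`.
-/

section DivisionWithRemainder

theorem injOn_fst_add_snd_mul (d : ℕ) :
    Set.InjOn (fun ts : ℕ × ℕ => ts.1 + ts.2 * d) {ts | ts.1 < d} := by
  rintro ⟨t, s⟩ (ht : t < d) ⟨t', s'⟩ (ht' : t' < d) (h : t + s * d = t' + s' * d)
  have hd : 0 < d := t.zero_le.trans_lt ht
  have hrem : t = t' := by
    simpa only [Nat.add_mul_mod_self_right, Nat.mod_eq_of_lt ht, Nat.mod_eq_of_lt ht']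
      using congrArg (· % d) h
  have hquot : s = s' := by
    simpa only [Nat.add_mul_div_right _ _ hd, Nat.div_eq_of_lt ht, Nat.div_eq_of_lt ht', zero_add]
      using congrArg (· / d) h
  rw [hrem, hquot]

theorem exists_eq_add_mul_iff_lt_and_dvd {P d r a : ℕ} (hPd : P ∣ d) :
    (∃ t, (t < d ∧ P ∣ t) ∧ ∃ s < r, a = t + s * d) ↔ a < r * d ∧ P ∣ a := by
  constructor
  · rintro ⟨t, ⟨htd, hPt⟩, s, hs, rfl⟩
    refine ⟨?_, dvd_add hPt (hPd.mul_left s)⟩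
    calc t + s * d < d + s * d := Nat.add_lt_add_right htd _
      _ = (s + 1) * d := by ring
      _ ≤ r * d := Nat.mul_le_mul_right _ hs
  · rintro ⟨ha, hPa⟩
    have hd : 0 < d := Nat.pos_of_lt_mul_left ha
    exact ⟨a % d, ⟨Nat.mod_lt _ hd, (Nat.dvd_mod_iff hPd).2 hPa⟩,
      a / d, (Nat.div_lt_iff_lt_mul hd).2 ha, (Nat.mod_add_div' a d).symm⟩

theorem exists_lt_eq_mul_iff_lt_and_dvd {P l a : ℕ} (hP : 0 < P) :
    (∃ v < l, a = P * v) ↔ a < P * l ∧ P ∣ a := by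
  constructor
  · rintro ⟨v, hv, rfl⟩
    exact ⟨Nat.mul_lt_mul_of_pos_left hv hP, dvd_mul_right P v⟩
  · rintro ⟨ha, v, rfl⟩
    exact ⟨v, Nat.lt_of_mul_lt_mul_left ha, rfl⟩

end DivisionWithRemainder

section PlaceValues

variable {p : ℕ → ℕ} {m y z : ℕ}

theorem bigP_eq_prod_Ico (p : ℕ → ℕ) (y : ℕ) : bigP p y = ∏ j ∈ Finset.Ico 1 y, p j :=
  Finset.prod_congr (by ext j; simp only [Finset.mem_Icc, Finset.mem_Ico]; lia) fun _ _ => rfl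

theorem bigP_pos (hp : ∀ i ∈ Finset.Icc 1 m, 0 < p i) (hy : y ≤ m + 1) : 0 < bigP p y :=
  Finset.prod_pos fun i hi => hp i (Finset.Icc_subset_Icc_right (by lia) hi)

theorem dwy_mul_prod_Ico (p : ℕ → ℕ) (r w : ℕ) (hy : 1 ≤ y) (hyz : y ≤ z) :
    dwy p r w y * ∏ j ∈ Finset.Ico y z, p j = dwy p r w z := by
  rw [dwy, dwy, bigP_eq_prod_Ico, bigP_eq_prod_Ico, mul_assoc,
    Finset.prod_Ico_consecutive _ hy hyz]

end PlaceValues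

section Digits

variable {p : ℕ → ℕ} {m r w y z : ℕ}

theorem digit_mul_add (p : ℕ → ℕ) (r t w : ℕ) {j : ℕ} (hj : j ∈ Finset.Icc 1 m) :
    digit p m r t (w * m + j) = t / dwy p r w j % p j := by
  obtain ⟨hj, hjm⟩ := Finset.mem_Icc.1 hj
  have hpos : w * m + j - 1 = j - 1 + w * m := by lia
  have hdiv : (w * m + j - 1) / m = w := by
    rw [hpos, Nat.add_mul_div_right _ _ (by lia), Nat.div_eq_of_lt (by lia), zero_add]
  have hmod : (w * m + j - 1) % m = j - 1 := by
    rw [hpos, Nat.add_mul_mod_self_right, Nat.mod_eq_of_lt (by lia)]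
  rw [digit, hdiv, hmod, Nat.sub_add_cancel hj]

theorem forall_digit_eq_zero_iff_prod_dvd (p : ℕ → ℕ) (r t w : ℕ) (hy : 1 ≤ y) (hyz : y ≤ z)
    (hzm : z ≤ m + 1) :
    (∀ pos ∈ Finset.Ico (w * m + y) (w * m + z), digit p m r t pos = 0) ↔
      ∏ j ∈ Finset.Ico y z, p j ∣ t / dwy p r w y := by
  induction z, hyz using Nat.le_induction with
  | base => simp
  | succ z hyz ih =>
    have hdigit : digit p m r t (w * m + z) = 0 ↔
        p z ∣ t / dwy p r w y / ∏ j ∈ Finset.Ico y z, p j := by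
      rw [digit_mul_add p r t w (Finset.mem_Icc.2 ⟨hy.trans hyz, by lia⟩),
        ← Nat.dvd_iff_mod_eq_zero, Nat.div_div_eq_div_mul, dwy_mul_prod_Ico p r w hy hyz]
    rw [← add_assoc, ← Finset.insert_Ico_right_eq_Ico_add_one (by lia), Finset.forall_mem_insert,
      hdigit, ih (by lia), Finset.prod_Ico_succ_top hyz]
    constructor
    · rintro ⟨hz, hprod⟩
      exact (Nat.dvd_div_iff_mul_dvd hprod).1 hz
    · intro h
      have hprod := dvd_of_mul_right_dvd h
      exact ⟨(Nat.dvd_div_iff_mul_dvd hprod).2 h, hprod⟩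

theorem forall_low_digit_eq_zero_iff_bigP_dvd (p : ℕ → ℕ) (r t : ℕ) (hy : 1 ≤ y)
    (hym : y ≤ m + 1) :
    (∀ pos ∈ Finset.Ico 1 y, digit p m r t pos = 0) ↔ bigP p y ∣ t := by
  have hone : dwy p r 0 1 = 1 := by simp [dwy, bigP]
  simpa [hone, bigP_eq_prod_Ico] using
    forall_digit_eq_zero_iff_prod_dvd p r t 0 le_rfl hy hym

theorem forall_high_digit_eq_zero_iff_lt_dwy {t : ℕ} (hy : 1 ≤ y) (hym : y ≤ m + 1)
    (ht : t < dwy p r w (m + 1)) :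
    (∀ pos ∈ Finset.Ico (w * m + y) (w * m + (m + 1)), digit p m r t pos = 0) ↔
      t < dwy p r w y := by
  rw [← dwy_mul_prod_Ico p r w hy hym] at ht
  have hd : 0 < dwy p r w y := Nat.pos_of_lt_mul_right ht
  rw [forall_digit_eq_zero_iff_prod_dvd p r t w hy hym le_rfl, ← Nat.div_eq_zero_iff_lt hd]
  exact ⟨fun h => Nat.eq_zero_of_dvd_of_lt h (Nat.div_lt_of_lt_mul ht), fun h => h ▸ dvd_zero _⟩

theorem Ttop_eq_setOf_lt_and_dvd (w : ℕ) (hp : ∀ i ∈ Finset.Icc 1 m, 0 < p i)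
    (hr : r = ∏ i ∈ Finset.Icc 1 m, p i) (hy : 1 ≤ y) (hym : y ≤ m + 1) :
    Ttop p m r (w + 1) (r ^ (w + 1)) y = {t | t < dwy p r w y ∧ bigP p y ∣ t} := by
  have htop : dwy p r w (m + 1) = r ^ (w + 1) := by
    rw [dwy, bigP, Nat.add_sub_cancel, ← hr, pow_succ]
  have hle : dwy p r w y ≤ r ^ (w + 1) := by
    rw [← htop, ← dwy_mul_prod_Ico p r w hy hym]
    exact Nat.le_mul_of_pos_right _ <| Finset.prod_pos fun i hi =>
      hp i (by simp only [Finset.mem_Ico, Finset.mem_Icc] at hi ⊢; lia)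
  ext t
  have hhigh (ht : t < r ^ (w + 1)) :=
    forall_high_digit_eq_zero_iff_lt_dwy (p := p) hy hym (htop ▸ ht)
  have hlow := forall_low_digit_eq_zero_iff_bigP_dvd p r t hy hym
  simp only [Finset.mem_Ico, and_imp, ← add_assoc, Order.lt_add_one_iff] at hhigh
  simp only [Finset.mem_Ico, and_imp, ← Nat.le_sub_one_iff_lt hy] at hlow
  rw [Ttop, Set.mem_ofPred_eq, Set.mem_ofPred_eq, hlow, Nat.add_sub_cancel, Nat.succ_mul,
    ← and_assoc]
  exact and_congr_left fun _ =>
    ⟨fun h => (hhigh h.1).1 h.2, fun h => ⟨h.trans_le hle, (hhigh (h.trans_le hle)).2 h⟩⟩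

end Digits

theorem stmt_12_general (m : ℕ) (p : ℕ → ℕ) (hp : ∀ i ∈ Finset.Icc 1 m, 0 < p i)
    (r : ℕ) (hr : r = ∏ i ∈ Finset.Icc 1 m, p i)
    (n' : ℕ) (hn' : 1 ≤ n') (l : ℕ) (hl : l = r ^ n')
    (y : ℕ) (hy : y ∈ Finset.Icc 1 (m + 1)) :
    Set.InjOn (fun ts : ℕ × ℕ => ts.1 + ts.2 * dwy p r (n' - 1) y)
      ((Ttop p m r n' l y ×ˢ {s : ℕ | s < r}) : Set (ℕ × ℕ)) ∧
    {a : ℕ | ∃ t ∈ Ttop p m r n' l y, ∃ s < r, a = t + s * dwy p r (n' - 1) y}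
      = {a : ℕ | ∃ v < l, a = bigP p y * v} := by
  obtain ⟨w, rfl⟩ := Nat.exists_eq_add_of_le' hn'
  obtain ⟨hy, hym⟩ := Finset.mem_Icc.1 hy
  have hPd : bigP p y ∣ dwy p r w y := dvd_mul_left _ _
  have hrd : r * dwy p r w y = bigP p y * r ^ (w + 1) := by rw [dwy]; ring
  rw [hl, Nat.add_sub_cancel, Ttop_eq_setOf_lt_and_dvd w hp hr hy hym]
  refine ⟨(injOn_fst_add_snd_mul _).mono fun _ h => h.1.1, Set.ext fun a => ?_⟩
  calc (∃ t, (t < dwy p r w y ∧ bigP p y ∣ t) ∧ ∃ s < r, a = t + s * dwy p r w y)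
    _ ↔ a < r * dwy p r w y ∧ bigP p y ∣ a := exists_eq_add_mul_iff_lt_and_dvd hPd
    _ ↔ a < bigP p y * r ^ (w + 1) ∧ bigP p y ∣ a := by rw [hrd]
    _ ↔ ∃ v < r ^ (w + 1), a = bigP p y * v :=
      (exists_lt_eq_mul_iff_lt_and_dvd (bigP_pos hp hym)).symm

/-- Let `p 1, …, p m` be primes (`m ≥ 2`), `r = p 1 ⋯ p m`,
`n' ≥ 2`, `l = r^{n'}`.  For every `y ∈ {1, …, m}`, the map
`(t, s) ↦ t + s·d_{n'-1,y}` is injective on `T_{n'-1,y} × {0, …, r-1}`, and its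
range is `{P·v : 0 ≤ v ≤ l-1}` where `P = ∏_{j=1}^{y-1} p_j`. -/
theorem stmt_12 (m : ℕ) (hm : 2 ≤ m) (p : ℕ → ℕ)
    (hp : ∀ i ∈ Finset.Icc 1 m, (p i).Prime)
    (r : ℕ) (hr : r = ∏ i ∈ Finset.Icc 1 m, p i)
    (n' : ℕ) (hn' : 2 ≤ n') (l : ℕ) (hl : l = r ^ n')
    (y : ℕ) (hy : y ∈ Finset.Icc 1 m) :
    Set.InjOn (fun ts : ℕ × ℕ => ts.1 + ts.2 * dwy p r (n' - 1) y)
      ((Ttop p m r n' l y ×ˢ {s : ℕ | s < r}) : Set (ℕ × ℕ)) ∧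
    {a : ℕ | ∃ t ∈ Ttop p m r n' l y, ∃ s < r, a = t + s * dwy p r (n' - 1) y}
      = {a : ℕ | ∃ v < l, a = bigP p y * v} :=
  stmt_12_general m p (fun i hi => (hp i hi).pos) r hr n' (by lia) l hl y
    (Finset.Icc_subset_Icc_right m.le_succ hy)
end

section
/- Let u be a positive divisor of q−1, let w = n'−2 and y ∈ {1, ..., m}. Then the repair bandwidth b = Σ_{(w',z) ∈ ({0,...,n'−1}×{1,...,m}) \ {(n'−2,y)}} rank_B({ζ^{u(t + s·d_{w',z})} : t ∈ T_{n'−2,y}, s ∈ {0, ..., r̄−1}}) of the linear repair scheme of Construction 2 for a node of rack (n'−2, y) satisfies b < ((n̄−1) + (m+3)r̄ + 4)·l/r̄. -/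
/-! Each rank is at most the number of distinct exponents involved, and at most `l`. Write every
exponent in mixed radix and let `h` be the position of the host rack, `D` its place value and
`M = D * r` the place value `m` positions higher, so that `l = M * c`. An integer below `l` whose
digits vanish at `h, …, h + m - 1` has the form `a + b * M` with `a < D` and `b < c`. Adding
`s * e` with `s < r` to all of them produces few exponents in two cases: if `e` is the place value
of a position below `h`, only `a` grows, and there are at most
`(D + r * e) * c = l / r + r * c * e` of them; if `e` is a multiple `g * M` of `M`, only `b` grows,
and there are at most `D * (c + r * g) = l / r + e`. Place values at least double from one position
to the next, so the two kinds of excess over `l / r` add up to at most `l` each. The remaining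
`m - 1` racks contribute at most `l` each. -/

open Finset

section MixedRadix

/-- The place value of position `k` (counted from `0`) in the mixed-radix system whose base at
position `j` is `b j`. -/
def placeValue (b : ℕ → ℕ) (k : ℕ) : ℕ := ∏ j ∈ range k, b j

/-- The integers below the place value of position `n` whose digits at the `m` positions
`h, …, h + m - 1` vanish; this is the set `T_{w,y}` of the repair scheme, with the positions
`wm + y, …` shifted down by one. -/
def zeroBlock (b : ℕ → ℕ) (n h m : ℕ) : Set ℕ :=
  {t | t < placeValue b n ∧ ∀ k < m, t / placeValue b (h + k) % b (h + k) = 0}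

variable {b : ℕ → ℕ}

theorem placeValue_zero (b : ℕ → ℕ) : placeValue b 0 = 1 := prod_range_zero b

theorem placeValue_succ (b : ℕ → ℕ) (k : ℕ) : placeValue b (k + 1) = placeValue b k * b k :=
  prod_range_succ b k

theorem placeValue_pos (hb : ∀ i, 0 < b i) (k : ℕ) : 0 < placeValue b k :=
  prod_pos fun i _ => hb i

theorem placeValue_dvd_placeValue (b : ℕ → ℕ) {i k : ℕ} (hik : i ≤ k) :
    placeValue b i ∣ placeValue b k :=
  prod_dvd_prod_of_subset _ _ _ (range_subset_range.2 hik)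

theorem sum_placeValue_le (hb : ∀ i, 2 ≤ b i) (k : ℕ) :
    ∑ i ∈ range k, placeValue b i ≤ placeValue b k := by
  induction k with
  | zero => simp
  | succ k ih =>
    calc ∑ i ∈ range (k + 1), placeValue b i
        ≤ placeValue b k + placeValue b k := by rw [sum_range_succ]; gcongr
      _ = placeValue b k * 2 := (mul_two _).symm
      _ ≤ placeValue b (k + 1) := by rw [placeValue_succ]; gcongr; exact hb k

theorem placeValue_add_of_periodic {m : ℕ} (hb : b.Periodic m) (k : ℕ) :
    placeValue b (k + m) = placeValue b k * placeValue b m := by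
  rw [placeValue, add_comm, prod_range_add, mul_comm]
  simp only [add_comm m, hb _, placeValue]

theorem placeValue_mul_add_of_periodic {m : ℕ} (hb : b.Periodic m) (w k : ℕ) :
    placeValue b (w * m + k) = placeValue b m ^ w * placeValue b k := by
  induction w with
  | zero => simp
  | succ w ih =>
    rw [show (w + 1) * m + k = w * m + k + m by ring, placeValue_add_of_periodic hb, ih, pow_succ]
    ring

theorem eq_mod_add_div_mul_of_digits_eq_zero {t h m : ℕ}
    (ht : ∀ k < m, t / placeValue b (h + k) % b (h + k) = 0) :
    t = t % placeValue b h + t / placeValue b (h + m) * placeValue b (h + m) := by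
  induction m with
  | zero => exact (Nat.mod_add_div' _ _).symm
  | succ m ih =>
    have hdvd : b (h + m) ∣ t / placeValue b (h + m) :=
      Nat.dvd_of_mod_eq_zero (ht m m.lt_succ_self)
    calc t = t % placeValue b h + t / placeValue b (h + m) * placeValue b (h + m) :=
          ih fun k hk => ht k (hk.trans m.lt_succ_self)
      _ = _ := by
          rw [← add_assoc, placeValue_succ, ← Nat.div_div_eq_div_mul, mul_comm (placeValue b _),
            ← mul_assoc, Nat.div_mul_cancel hdvd]

end MixedRadix

section Grid

/-- The two-dimensional arithmetic progression of the integers `i + j * M` with `i < X` and `j < Y`;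
the sets of exponents are counted by enclosing them in such grids. -/
def grid (M X Y : ℕ) : Finset ℕ := image₂ (fun i j => i + j * M) (range X) (range Y)

/-- The integers `t + s * e` with `t ∈ T` and `s < r`: up to the factor `u`, the exponents of the
symbols downloaded from the helper rack with place value `e`. -/
def shifts (T : Set ℕ) (r e : ℕ) : Set ℕ := {k | ∃ t ∈ T, ∃ s < r, k = t + s * e}

theorem mem_grid {M X Y k : ℕ} : k ∈ grid M X Y ↔ ∃ i < X, ∃ j < Y, i + j * M = k := by
  simp [grid]

theorem card_grid_le (M X Y : ℕ) : #(grid M X Y) ≤ X * Y := by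
  simpa only [grid, card_range] using card_image₂_le _ (range X) (range Y)

theorem shifts_mono {S T : Set ℕ} (hST : S ⊆ T) (r e : ℕ) : shifts S r e ⊆ shifts T r e :=
  fun _ ⟨t, ht, hs⟩ => ⟨t, hST ht, hs⟩

theorem shifts_grid_subset (M X Y r e : ℕ) :
    shifts (grid M X Y) r e ⊆ grid M (X + r * e) Y := by
  rintro _ ⟨t, ht, s, hs, rfl⟩
  obtain ⟨i, hi, j, hj, rfl⟩ := mem_grid.1 ht
  have hse : s * e ≤ r * e := Nat.mul_le_mul_right e hs.le
  exact mem_grid.2 ⟨i + s * e, by omega, j, hj, by ring⟩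

theorem shifts_grid_mul_subset (M X Y r g : ℕ) :
    shifts (grid M X Y) r (g * M) ⊆ grid M X (Y + r * g) := by
  rintro _ ⟨t, ht, s, hs, rfl⟩
  obtain ⟨i, hi, j, hj, rfl⟩ := mem_grid.1 ht
  have hsg : s * g ≤ r * g := Nat.mul_le_mul_right g hs.le
  exact mem_grid.2 ⟨i, hi, j + s * g, by omega, by ring⟩

theorem zeroBlock_subset_grid {b : ℕ → ℕ} {n h m c : ℕ} (hpos : 0 < placeValue b h)
    (hc : placeValue b n = placeValue b (h + m) * c) :
    zeroBlock b n h m ⊆ grid (placeValue b (h + m)) (placeValue b h) c := by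
  rintro t ⟨htn, ht⟩
  exact mem_grid.2 ⟨t % placeValue b h, Nat.mod_lt _ hpos, t / placeValue b (h + m),
    Nat.div_lt_of_lt_mul (hc ▸ htn), (eq_mod_add_div_mul_of_digits_eq_zero ht).symm⟩

end Grid

section Download

theorem sum_erase_range_eq_add_add {A : Type*} [AddCommMonoid A] (f : ℕ → A) {n h m : ℕ}
    (hm : 0 < m) (hn : h + m ≤ n) :
    ∑ i ∈ (range n).erase h, f i =
      ∑ i ∈ range h, f i + ∑ i ∈ Ioo h (h + m), f i + ∑ i ∈ Ico (h + m) n, f i := by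
  rw [← sum_union, ← sum_union]
  · congr 1
    ext i
    simp only [mem_erase, mem_range, mem_union, mem_Ioo, mem_Ico]
    omega
  all_goals
    rw [disjoint_left]
    intro i
    simp only [mem_range, mem_union, mem_Ioo, mem_Ico]
    omega

variable (R : Type*) {V : Type*} [Semiring R] [AddCommMonoid V] [Module R V]

/-- The number of symbols downloaded from the helper rack with place value `e`: the rank of the
vectors `x k`, where `k` runs over the integers `t + s * e` with `t ∈ T` and `s < r`. The repair
scheme takes `x k = ζ ^ (u * k)`. -/
noncomputable def downloadRank (x : ℕ → V) (T : Set ℕ) (r e : ℕ) : ℕ :=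
  Module.finrank R (Submodule.span R (x '' shifts T r e))

variable [StrongRankCondition R]

theorem finrank_span_image_le_card {ι : Type*} (x : ι → V) {S : Set ι} {T : Finset ι}
    (hST : S ⊆ T) : Module.finrank R (Submodule.span R (x '' S)) ≤ #T := by
  classical
  have hsub : x '' S ⊆ T.image x := by
    rw [coe_image]
    exact Set.image_mono hST
  calc Module.finrank R (Submodule.span R (x '' S))
      ≤ Module.finrank R (Submodule.span R (T.image x : Set V)) :=
        Submodule.finrank_mono (Submodule.span_mono hsub)
    _ ≤ #(T.image x) := finrank_span_finset_le_card _
    _ ≤ #T := card_image_le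

theorem downloadRank_le_finrank [Module.Finite R V] (x : ℕ → V) (T : Set ℕ) (r e : ℕ) :
    downloadRank R x T r e ≤ Module.finrank R V :=
  Submodule.finrank_le _

theorem downloadRank_le_of_subset_grid (x : ℕ → V) {T : Set ℕ} {r e M X Y : ℕ}
    (hT : shifts T r e ⊆ grid M X Y) : downloadRank R x T r e ≤ X * Y :=
  (finrank_span_image_le_card R x hT).trans (card_grid_le M X Y)

variable {b : ℕ → ℕ} {n h m r c : ℕ} (x : ℕ → V)

theorem downloadRank_zeroBlock_le (hb : ∀ i, 0 < b i)
    (hc : placeValue b n = placeValue b (h + m) * c) (e : ℕ) :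
    downloadRank R x (zeroBlock b n h m) r e ≤ placeValue b h * c + r * c * e := by
  have hT := zeroBlock_subset_grid (placeValue_pos hb h) hc
  calc downloadRank R x (zeroBlock b n h m) r e
      ≤ (placeValue b h + r * e) * c :=
        downloadRank_le_of_subset_grid R x ((shifts_mono hT r e).trans (shifts_grid_subset ..))
    _ = placeValue b h * c + r * c * e := by ring

theorem downloadRank_zeroBlock_le_of_dvd (hb : ∀ i, 0 < b i)
    (hr : placeValue b (h + m) = placeValue b h * r)
    (hc : placeValue b n = placeValue b (h + m) * c) {e : ℕ} (he : placeValue b (h + m) ∣ e) :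
    downloadRank R x (zeroBlock b n h m) r e ≤ placeValue b h * c + e := by
  obtain ⟨g, rfl⟩ := he
  rw [mul_comm _ g]
  have hT := zeroBlock_subset_grid (placeValue_pos hb h) hc
  calc downloadRank R x (zeroBlock b n h m) r (g * placeValue b (h + m))
      ≤ placeValue b h * (c + r * g) :=
        downloadRank_le_of_subset_grid R x
          ((shifts_mono hT r _).trans (shifts_grid_mul_subset ..))
    _ = placeValue b h * c + g * placeValue b (h + m) := by rw [hr]; ring

theorem sum_downloadRank_below_le (hb : ∀ i, 2 ≤ b i)
    (hr : placeValue b (h + m) = placeValue b h * r)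
    (hc : placeValue b n = placeValue b (h + m) * c) :
    ∑ i ∈ range h, downloadRank R x (zeroBlock b n h m) r (placeValue b i) ≤
      h * (placeValue b h * c) + placeValue b n := by
  have hb0 (i : ℕ) : 0 < b i := two_pos.trans_le (hb i)
  calc ∑ i ∈ range h, downloadRank R x (zeroBlock b n h m) r (placeValue b i)
      ≤ ∑ i ∈ range h, (placeValue b h * c + r * c * placeValue b i) :=
        sum_le_sum fun i _ => downloadRank_zeroBlock_le R x hb0 hc _
    _ = h * (placeValue b h * c) + r * c * ∑ i ∈ range h, placeValue b i := by
        rw [sum_add_distrib, sum_const, card_range, smul_eq_mul, ← mul_sum]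
    _ ≤ h * (placeValue b h * c) + r * c * placeValue b h := by
        gcongr
        exact sum_placeValue_le hb h
    _ = h * (placeValue b h * c) + placeValue b n := by rw [hc, hr]; ring

theorem sum_downloadRank_above_le (hb : ∀ i, 2 ≤ b i)
    (hr : placeValue b (h + m) = placeValue b h * r)
    (hc : placeValue b n = placeValue b (h + m) * c) :
    ∑ i ∈ Ico (h + m) n, downloadRank R x (zeroBlock b n h m) r (placeValue b i) ≤
      (n - (h + m)) * (placeValue b h * c) + placeValue b n := by
  have hb0 (i : ℕ) : 0 < b i := two_pos.trans_le (hb i)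
  calc ∑ i ∈ Ico (h + m) n, downloadRank R x (zeroBlock b n h m) r (placeValue b i)
      ≤ ∑ i ∈ Ico (h + m) n, (placeValue b h * c + placeValue b i) :=
        sum_le_sum fun i hi => downloadRank_zeroBlock_le_of_dvd R x hb0 hr hc
          (placeValue_dvd_placeValue b (mem_Ico.1 hi).1)
    _ = (n - (h + m)) * (placeValue b h * c) + ∑ i ∈ Ico (h + m) n, placeValue b i := by
        rw [sum_add_distrib, sum_const, Nat.card_Ico, smul_eq_mul]
    _ ≤ (n - (h + m)) * (placeValue b h * c) + ∑ i ∈ range n, placeValue b i := by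
        gcongr
        exact fun i hi => mem_range.2 (mem_Ico.1 hi).2
    _ ≤ (n - (h + m)) * (placeValue b h * c) + placeValue b n := by
        gcongr
        exact sum_placeValue_le hb n

theorem sum_erase_downloadRank_le [Module.Finite R V] (hb : ∀ i, 2 ≤ b i)
    (hm : 0 < m) (hn : h + m ≤ n) (hr : placeValue b (h + m) = placeValue b h * r)
    (hc : placeValue b n = placeValue b (h + m) * c) (hV : Module.finrank R V ≤ placeValue b n) :
    ∑ i ∈ (range n).erase h, downloadRank R x (zeroBlock b n h m) r (placeValue b i) ≤
      (n - m) * (placeValue b h * c) + (m + 1) * placeValue b n := by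
  have hinside : ∑ i ∈ Ioo h (h + m), downloadRank R x (zeroBlock b n h m) r (placeValue b i) ≤
      (m - 1) * placeValue b n := by
    simpa using sum_le_card_nsmul (Ioo h (h + m)) _ _
      fun i _ => (downloadRank_le_finrank R x _ r (placeValue b i)).trans hV
  rw [sum_erase_range_eq_add_add _ hm hn]
  calc _ ≤ _ := add_le_add (add_le_add (sum_downloadRank_below_le R x hb hr hc) hinside)
        (sum_downloadRank_above_le R x hb hr hc)
    _ = (h + (n - (h + m))) * (placeValue b h * c) + (m - 1 + 2) * placeValue b n := by ring
    _ = (n - m) * (placeValue b h * c) + (m + 1) * placeValue b n := by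
        rw [show h + (n - (h + m)) = n - m by omega, show m - 1 + 2 = m + 1 by omega]

end Download

section CyclicRadix

/-- The bases `p_1, …, p_m` of the multi-base expansion, repeated cyclically and indexed from
position `0`. -/
def cyclicBase (p : ℕ → ℕ) (m i : ℕ) : ℕ := p (i % m + 1)

variable {p : ℕ → ℕ} {m r : ℕ}

theorem cyclicBase_periodic (p : ℕ → ℕ) (m : ℕ) : (cyclicBase p m).Periodic m :=
  fun i => by rw [cyclicBase, Nat.add_mod_right, cyclicBase]

theorem two_le_cyclicBase (hp : ∀ i ∈ Icc 1 m, 2 ≤ p i) (hm : 0 < m) (i : ℕ) :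
    2 ≤ cyclicBase p m i :=
  hp _ (mem_Icc.2 ⟨Nat.le_add_left .., Nat.mod_lt i hm⟩)

theorem placeValue_cyclicBase_of_le {k : ℕ} (hk : k ≤ m) :
    placeValue (cyclicBase p m) k = ∏ j ∈ Icc 1 k, p j := by
  rw [placeValue, ← Ico_add_one_right_eq_Icc, prod_Ico_eq_prod_range, Nat.add_sub_cancel]
  refine prod_congr rfl fun i hi => ?_
  rw [cyclicBase, Nat.mod_eq_of_lt ((mem_range.1 hi).trans_le hk), add_comm]

theorem placeValue_cyclicBase_add (hr : r = ∏ i ∈ Icc 1 m, p i) (k : ℕ) :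
    placeValue (cyclicBase p m) (k + m) = placeValue (cyclicBase p m) k * r := by
  rw [placeValue_add_of_periodic (cyclicBase_periodic p m), placeValue_cyclicBase_of_le le_rfl, hr]

theorem dwy_eq_placeValue (hr : r = ∏ i ∈ Icc 1 m, p i) (w : ℕ) {z : ℕ} (hz : z ∈ Icc 1 m) :
    dwy p r w z = placeValue (cyclicBase p m) (w * m + (z - 1)) := by
  have hzm : z - 1 ≤ m := (Nat.sub_le z 1).trans (mem_Icc.1 hz).2
  rw [placeValue_mul_add_of_periodic (cyclicBase_periodic p m), placeValue_cyclicBase_of_le hzm,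
    placeValue_cyclicBase_of_le le_rfl, ← hr, dwy, bigP]

theorem pow_eq_placeValue (hr : r = ∏ i ∈ Icc 1 m, p i) (n : ℕ) :
    r ^ n = placeValue (cyclicBase p m) (n * m) := by
  have h := placeValue_mul_add_of_periodic (cyclicBase_periodic p m) n 0
  rw [placeValue_cyclicBase_of_le le_rfl, ← hr, placeValue_zero, mul_one, add_zero] at h
  exact h.symm

theorem digit_succ_eq (hr : r = ∏ i ∈ Icc 1 m, p i) (hm : 0 < m) (t i : ℕ) :
    digit p m r t (i + 1) = t / placeValue (cyclicBase p m) i % cyclicBase p m i := by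
  have hmem : i % m + 1 ∈ Icc 1 m := mem_Icc.2 ⟨Nat.le_add_left .., Nat.mod_lt i hm⟩
  rw [digit, Nat.add_sub_cancel, dwy_eq_placeValue hr _ hmem, Nat.add_sub_cancel,
    Nat.div_add_mod', cyclicBase]

theorem sum_erase_product_Icc_eq_sum_erase_range {A : Type*} [AddCommMonoid A] (f : ℕ → A)
    (n w : ℕ) {y : ℕ} (hy : y ∈ Icc 1 m) :
    ∑ wz ∈ (range n ×ˢ Icc 1 m).erase (w, y), f (wz.1 * m + (wz.2 - 1)) =
      ∑ i ∈ (range (n * m)).erase (w * m + (y - 1)), f i := by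
  have hm : 0 < m := (mem_Icc.1 hy).1.trans (mem_Icc.1 hy).2
  have hlt {z : ℕ} (hz : z ∈ Icc 1 m) : z - 1 < m := by grind
  have hdiv (w' : ℕ) {z : ℕ} (hz : z ∈ Icc 1 m) : (w' * m + (z - 1)) / m = w' := by
    rw [mul_comm, Nat.mul_add_div hm, Nat.div_eq_of_lt (hlt hz), add_zero]
  have hmod (w' : ℕ) {z : ℕ} (hz : z ∈ Icc 1 m) : (w' * m + (z - 1)) % m + 1 = z := by
    rw [mul_comm, Nat.mul_add_mod, Nat.mod_eq_of_lt (hlt hz), Nat.sub_add_cancel (mem_Icc.1 hz).1]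
  refine sum_nbij' (fun wz => wz.1 * m + (wz.2 - 1)) (fun i => (i / m, i % m + 1)) ?_ ?_ ?_
    (fun i _ => Nat.div_add_mod' i m) (fun _ _ => rfl)
  · rintro ⟨w', z⟩ hwz
    simp only [mem_erase, mem_product, mem_range] at hwz ⊢
    obtain ⟨hne, hw', hz⟩ := hwz
    refine ⟨fun heq => hne (Prod.ext ?_ ?_), ?_⟩
    · rw [← hdiv w' hz, heq, hdiv w hy]
    · rw [← hmod w' hz, heq, hmod w hy]
    · calc w' * m + (z - 1) < (w' + 1) * m := by rw [add_one_mul]; gcongr; exact hlt hz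
        _ ≤ n * m := by gcongr; exact hw'
  · intro i hi
    simp only [mem_erase, mem_product, mem_range, mem_Icc] at hi ⊢
    refine ⟨fun heq => hi.1 ?_, Nat.div_lt_of_lt_mul (mul_comm n m ▸ hi.2), Nat.le_add_left ..,
      Nat.mod_lt i hm⟩
    obtain ⟨rfl, rfl⟩ := Prod.mk.inj heq
    exact (Nat.div_add_mod' i m).symm
  · rintro ⟨w', z⟩ hwz
    have hz := (mem_product.1 (mem_of_mem_erase hwz)).2
    exact Prod.ext (hdiv w' hz) (hmod w' hz)

theorem finrank_span_eq_downloadRank {R V : Type*} [Semiring R] [AddCommMonoid V] [Module R V]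
    (hr : r = ∏ i ∈ Icc 1 m, p i) (n w w' : ℕ) {y z : ℕ} (hy : y ∈ Icc 1 m) (hz : z ∈ Icc 1 m)
    (x : ℕ → V) :
    Module.finrank R (Submodule.span R
        {v : V | ∃ t, (t < r ^ n ∧ ∀ k < m, digit p m r t (w * m + y + k) = 0) ∧
          ∃ s < r, v = x (t + s * dwy p r w' z)}) =
      downloadRank R x (zeroBlock (cyclicBase p m) (n * m) (w * m + (y - 1)) m) r
        (placeValue (cyclicBase p m) (w' * m + (z - 1))) := by
  obtain ⟨hy1, hym⟩ := mem_Icc.1 hy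
  have hdigit (t k : ℕ) := digit_succ_eq hr (hy1.trans hym) t (w * m + (y - 1) + k)
  simp only [show ∀ k, w * m + (y - 1) + k + 1 = w * m + y + k by omega] at hdigit
  refine congrArg (fun S : Set V => Module.finrank R (Submodule.span R S)) (Set.ext fun v => ?_)
  simp only [shifts, zeroBlock, ← hdigit, ← pow_eq_placeValue hr, dwy_eq_placeValue hr _ hz,
    Set.mem_image, Set.mem_ofPred_eq]
  constructor
  · rintro ⟨t, ht, s, hs, rfl⟩
    exact ⟨_, ⟨t, ht, s, hs, rfl⟩, rfl⟩
  · rintro ⟨_, ⟨t, ht, s, hs, rfl⟩, rfl⟩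
    exact ⟨t, ht, s, hs, rfl⟩

end CyclicRadix

theorem stmt_14_general {m : ℕ} {p : ℕ → ℕ} (hp : ∀ i ∈ Icc 1 m, 2 ≤ p i)
    {r : ℕ} (hr : r = ∏ i ∈ Icc 1 m, p i) {n' l : ℕ} (hl : l = r ^ n')
    {R V : Type*} [Semiring R] [StrongRankCondition R] [AddCommMonoid V] [Module R V]
    [Module.Finite R V] (hV : Module.finrank R V ≤ l) (x : ℕ → V)
    {w : ℕ} (hw : w + 2 ≤ n') {y : ℕ} (hy : y ∈ Icc 1 m) :
    ((∑ wz ∈ (range n' ×ˢ Icc 1 m).erase (w, y),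
        Module.finrank R ↥(Submodule.span R
          {v : V | ∃ t, (t < l ∧ ∀ k < m, digit p m r t (w * m + y + k) = 0) ∧
            ∃ s < r, v = x (t + s * dwy p r wz.1 wz.2)}) : ℕ) : ℝ)
      ≤ (((n' * m : ℕ) : ℝ) - m + (m + 1) * r) * l / r := by
  subst hl
  obtain ⟨hy1, hym⟩ := mem_Icc.1 hy
  have hm : 0 < m := hy1.trans hym
  set h := w * m + (y - 1)
  have hn : h + m ≤ n' * m := by
    calc h + m ≤ (w + 2) * m := by rw [add_mul]; omega
      _ ≤ n' * m := by gcongr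
  obtain ⟨c, hc⟩ := placeValue_dvd_placeValue (cyclicBase p m) hn
  have hsum := sum_erase_downloadRank_le R x (two_le_cyclicBase hp hm) hm hn
    (placeValue_cyclicBase_add hr h) hc (hV.trans_eq (pow_eq_placeValue hr n'))
  rw [← sum_erase_product_Icc_eq_sum_erase_range _ n' w hy, ← pow_eq_placeValue hr] at hsum
  have hl : r ^ n' = placeValue (cyclicBase p m) h * c * r := by
    rw [pow_eq_placeValue hr, hc, placeValue_cyclicBase_add hr, mul_right_comm]
  have hr0 : r ≠ 0 := hr ▸ prod_ne_zero_iff.2 fun i hi => (two_pos.trans_le (hp i hi)).ne'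
  rw [sum_congr rfl fun wz hwz => finrank_span_eq_downloadRank hr n' w wz.1 hy
    (mem_product.1 (mem_of_mem_erase hwz)).2 x]
  calc _ ≤ (((n' * m - m) * (placeValue (cyclicBase p m) h * c) + (m + 1) * r ^ n' : ℕ) : ℝ) := by
        exact_mod_cast hsum
    _ = _ := by
        rw [hl]
        push_cast [Nat.cast_sub (show m ≤ n' * m by omega)]
        field_simp

/-- **Theorem 6(ii).** Construction-2 setting: `B = GF(q)`,
primes `p 1, …, p m` (`m ≥ 2`), `r = p 1 ⋯ p m`, `n' ≥ 2`, `n̄ = n'm`,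
`l = r^{n'}`, `F = GF(q^l)`, `ζ` primitive in `F`, `u > 0` a divisor of `q-1`.
For the host rack `(n'-2, y)` with `y ∈ {1, …, m}`, and
`T_{n'-2,y} = {t < l : digits of t at positions (n'-2)m+y, …, (n'-2)m+y+m-1 are 0}`,
the repair bandwidth
`b = Σ_{(w',z) ≠ (n'-2,y)} rank_B({ζ^{u(t+s·d_{w',z})} : t ∈ T_{n'-2,y}, s < r})`
satisfies `b < ((n̄-1) + (m+3)r + 4)·l/r`. -/
theorem stmt_14 (q m : ℕ) (hm : 2 ≤ m) (p : ℕ → ℕ)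
    (hp : ∀ i ∈ Finset.Icc 1 m, (p i).Prime)
    (r : ℕ) (hr : r = ∏ i ∈ Finset.Icc 1 m, p i)
    (n' : ℕ) (hn' : 2 ≤ n') (l : ℕ) (hl : l = r ^ n')
    (B F : Type*) [Field B] [Field F] [Fintype B] [Fintype F] [Algebra B F]
    (hq : Fintype.card B = q) (hrk : Module.finrank B F = l)
    (ζ : F) (hζ : orderOf ζ = q ^ l - 1)
    (u : ℕ) (hu : 0 < u) (hdvd : u ∣ q - 1)
    (y : ℕ) (hy : y ∈ Finset.Icc 1 m) :
    ((∑ wz ∈ (Finset.range n' ×ˢ Finset.Icc 1 m).erase (n' - 2, y),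
        Module.finrank B ↥(Submodule.span B
          {x : F | ∃ t, (t < l ∧ ∀ k < m, digit p m r t ((n' - 2) * m + y + k) = 0) ∧
            ∃ s < r, x = ζ ^ (u * (t + s * dwy p r wz.1 wz.2))}) : ℕ) : ℝ)
      < (((n' * m : ℕ) : ℝ) - 1 + (m + 3) * r + 4) * l / r := by
  have hr0 : 0 < r := hr ▸ prod_pos fun i hi => (hp i hi).pos
  have hm0 : (2 : ℝ) ≤ m := by exact_mod_cast hm
  refine (stmt_14_general (fun i hi => (hp i hi).two_le) hr hl hrk.le (fun k => ζ ^ (u * k))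
    (by omega) hy).trans_lt ?_
  subst hl
  gcongr ?_ * _ / _
  linarith
end
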